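/- With W = (U,v,v+1,V',j,V'') as above (canonical increase (v,v+1) split first by a bar of length j at position h+j), one has Q_W = (q/(1+q)) Q_{U,v,v+1,V',j-1,V''} + Q_{U,v,v,V',j+1,V''} - (q/(1+q)) Q_{U,v-1,v,V',j+1,V''}. -/

import Mathlib

open Polynomial Finset

noncomputable section

abbrev K : Type := RatFunc ℚ

def qq : K := RatFunc.X

def qint (q : K) (n : ℕ) : K := ∑ i ∈ Finset.range n, q ^ i

def Legal (W : List ℕ) : Prop :=
  (∀ h : W ≠ [], 1 ≤ W.head h ∧ W.head h ≤ 2) ∧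
    List.Chain' (fun a b => 1 ≤ b ∧ b ≤ a + 1) W

def Prev (q : K) : List ℕ → MvPolynomial ℤ K
  | [] => MvPolynomial.C q * MvPolynomial.X (-1) + MvPolynomial.X 0
  | w :: V =>
      MvPolynomial.C ((1 - q)⁻¹) *
        ((MvPolynomial.X ((V.length : ℤ) + 1) - MvPolynomial.C (q ^ w)) * Prev q V +
          (1 - MvPolynomial.X ((V.length : ℤ) + 1)) *
            MvPolynomial.aeval
              (fun j : ℤ =>
                if (V.length : ℤ) + 1 - (w : ℤ) ≤ j ∧ j ≤ (V.length : ℤ) then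
                  MvPolynomial.C q * MvPolynomial.X j
                else MvPolynomial.X j)
              (Prev q V))

def Psched (q : K) (W : List ℕ) : MvPolynomial ℤ K := Prev q W.reverse

def Qsched (q : K) (W : List ℕ) : Polynomial K :=
  MvPolynomial.aeval (fun _ : ℤ => (Polynomial.X : Polynomial K)) (Psched q W)

def TameFE (q : K) (W : List ℕ) : Prop :=
  ∀ x : K, x ≠ 0 →
    (1 - q / x) * (Qsched q W).eval x +
        x ^ (W.length + 1) * (1 - q * x) * (Qsched q W).eval x⁻¹ =
      (1 + x ^ (W.length + 1)) * ((1 - q ^ 2) * (W.map (qint q)).prod)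


/-- scaling of the variables under a bar of length `w` placed at position `n+1` -/
def scl (q : K) (n w : ℕ) (s : ℤ → K) : ℤ → K := fun j =>
  if (n : ℤ) + 1 - (w : ℤ) ≤ j ∧ j ≤ (n : ℤ) then q * s j else s j

/-- evaluation of `Prev` at a point -/
def FF (q : K) (L : List ℕ) (s : ℤ → K) : K := MvPolynomial.eval s (Prev q L)

lemma FF_cons (q : K) (w : ℕ) (V : List ℕ) (s : ℤ → K) :
    FF q (w :: V) s = (1 - q)⁻¹ * ((s ((V.length : ℤ) + 1) - q ^ w) * FF q V s +
      (1 - s ((V.length : ℤ) + 1)) * FF q V (scl q V.length w s)) := by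
  have h : MvPolynomial.eval s (MvPolynomial.aeval
              (fun j : ℤ =>
                if (V.length : ℤ) + 1 - (w : ℤ) ≤ j ∧ j ≤ (V.length : ℤ) then
                  MvPolynomial.C q * MvPolynomial.X j
                else MvPolynomial.X j)
              (Prev q V)) = FF q V (scl q V.length w s) := by
    unfold FF
    rw [← MvPolynomial.coe_aeval_eq_eval, ← MvPolynomial.coe_aeval_eq_eval]
    simp only [RingHom.coe_coe]
    rw [← AlgHom.comp_apply, MvPolynomial.comp_aeval]
    congr 2
    funext j
    unfold scl
    split_ifs <;> simp
  rw [FF, Prev]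
  simp only [map_mul, map_add, map_sub, map_one, MvPolynomial.eval_C, MvPolynomial.eval_X, h]
  simp only [FF]

lemma FF_congr (q : K) (L : List ℕ) : ∀ (s t : ℤ → K),
    (∀ j : ℤ, j ≤ L.length → s j = t j) → FF q L s = FF q L t := by
  induction L with
  | nil => intro s t h; simp [FF, Prev, h (-1) (by simp), h 0 (by simp)]
  | cons w V ih =>
    intro s t h
    simp only [List.length_cons, Nat.cast_add, Nat.cast_one] at h
    rw [FF_cons, FF_cons, h _ le_rfl, ih s t (fun j hj => h j (by omega)),
      ih (scl q V.length w s) (scl q V.length w t)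
        (fun j hj => by simp only [scl, h j (by omega)])]

lemma scl_update (q : K) (n w : ℕ) (s : ℤ → K) (i : ℤ) (t : K) :
    scl q n w (Function.update s i t) = Function.update (scl q n w s) i
      (if (n : ℤ) + 1 - (w : ℤ) ≤ i ∧ i ≤ (n : ℤ) then q * t else t) := by
  funext j
  by_cases hj : j = i
  · subst hj; simp [scl]
  · simp [scl, hj]

/-- multi-affinity -/
lemma FF_affine (q : K) (L : List ℕ) : ∀ (i : ℤ) (s : ℤ → K), ∃ a b : K, ∀ t,
    FF q L (Function.update s i t) = a + b * t := by
  induction L with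
  | nil =>
    intro i s
    by_cases h1 : i = -1
    · subst h1
      exact ⟨s 0, q, fun t => by simp [FF, Prev]; ring⟩
    · by_cases h0 : i = 0
      · subst h0
        exact ⟨q * s (-1), 1, fun t => by simp [FF, Prev]⟩
      · exact ⟨q * s (-1) + s 0, 0, fun t => by
          simp [FF, Prev, Function.update_of_ne (Ne.symm h1), Function.update_of_ne (Ne.symm h0)]⟩
  | cons w V ih =>
    intro i s
    by_cases hi : i = (V.length : ℤ) + 1
    · refine ⟨(1 - q)⁻¹ * (- q ^ w * FF q V s + FF q V (scl q V.length w s)),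
        (1 - q)⁻¹ * (FF q V s - FF q V (scl q V.length w s)), fun t => ?_⟩
      rw [FF_cons, scl_update, FF_congr q V (Function.update s i t) s,
        FF_congr q V (Function.update (scl q V.length w s) i _) (scl q V.length w s), ← hi]
      · simp; ring
      · intro j hj; rw [Function.update_of_ne (by omega)]
      · intro j hj; rw [Function.update_of_ne (by omega)]
    · obtain ⟨a, b, h⟩ := ih i s
      obtain ⟨a', b', h'⟩ := ih i (scl q V.length w s)
      set y := s ((V.length : ℤ) + 1) with hy
      by_cases hc : (V.length : ℤ) + 1 - (w : ℤ) ≤ i ∧ i ≤ (V.length : ℤ)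
      · refine ⟨(1 - q)⁻¹ * ((y - q ^ w) * a + (1 - y) * a'),
          (1 - q)⁻¹ * ((y - q ^ w) * b + (1 - y) * (b' * q)), fun t => ?_⟩
        rw [FF_cons, scl_update, if_pos hc, h, h', Function.update_of_ne (Ne.symm hi), ← hy]
        ring
      · refine ⟨(1 - q)⁻¹ * ((y - q ^ w) * a + (1 - y) * a'),
          (1 - q)⁻¹ * ((y - q ^ w) * b + (1 - y) * b'), fun t => ?_⟩
        rw [FF_cons, scl_update, if_neg hc, h, h', Function.update_of_ne (Ne.symm hi), ← hy]
        ring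

/-- three-term relation on the locus `s (h-1) = s h` -/
def PairRel (q : K) (h : ℤ) (L1 L2 L3 : List ℕ) : Prop :=
  ∀ s : ℤ → K, s (h - 1) = s h → FF q L1 s = (1 + q) * FF q L2 s - q * FF q L3 s

lemma Rel_cons (q : K) (h : ℤ) (L1 L2 L3 : List ℕ) (w : ℕ) (e2 : L2.length = L1.length)
    (e3 : L3.length = L1.length) (hl : h ≤ L1.length)
    (hw : (L1.length : ℤ) + 1 - w ≤ h - 1 ∨ h < (L1.length : ℤ) + 1 - w)
    (H : PairRel q h L1 L2 L3) : PairRel q h (w :: L1) (w :: L2) (w :: L3) := by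
  intro s hs
  have h1 := H s hs
  have h2 := H (scl q L1.length w s) (by
    unfold scl
    rcases hw with hw | hw
    · rw [if_pos (by omega), if_pos (by omega), hs]
    · rw [if_neg (by omega), if_neg (by omega), hs])
  rw [FF_cons, FF_cons, FF_cons, e2, e3, h1, h2]
  ring

lemma Rel_append_low (q : K) (h : ℤ) (L1 L2 L3 : List ℕ) (e2 : L2.length = L1.length)
    (e3 : L3.length = L1.length) (hl : h = L1.length) (A : List ℕ)
    (hA : ∀ w ∈ A, A.length + 1 ≤ w)
    (H : PairRel q h L1 L2 L3) : PairRel q h (A ++ L1) (A ++ L2) (A ++ L3) := by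
  suffices ∀ c : ℕ, A.length + 1 ≤ c → (∀ w ∈ A, c ≤ w) →
      PairRel q h (A ++ L1) (A ++ L2) (A ++ L3) from this _ le_rfl hA
  clear hA
  induction A with
  | nil => intro c _ _; simpa using H
  | cons a A ih =>
    intro c hc hA
    have ha := hA a (by simp)
    simp only [List.length_cons] at hc
    refine Rel_cons q h _ _ _ a (by simp [e2]) (by simp [e3]) ?_ (Or.inl ?_)
      (ih c (by omega) (fun w hw => hA w (by simp [hw])))
    · simp; omega
    · simp; omega

lemma Rel_append_high (q : K) (h : ℤ) (L1 L2 L3 : List ℕ) (e2 : L2.length = L1.length)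
    (e3 : L3.length = L1.length) (c : ℕ) (hl : h + c ≤ L1.length) (A : List ℕ)
    (hA : ∀ w ∈ A, w ≤ c)
    (H : PairRel q h L1 L2 L3) : PairRel q h (A ++ L1) (A ++ L2) (A ++ L3) := by
  induction A with
  | nil => simpa using H
  | cons a A ih =>
    have ha := hA a (by simp)
    refine Rel_cons q h _ _ _ a (by simp [e2]) (by simp [e3]) ?_ (Or.inr ?_)
      (ih (fun w hw => hA w (by simp [hw])))
    · simp; omega
    · simp; omega

/-- base case of the no-splitter identity -/
lemma Rel_base (q : K) (U : List ℕ) (k : ℕ) :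
    PairRel q ((U.length : ℤ) + 2) ((k + 2) :: (k + 1) :: U) ((k + 1) :: (k + 1) :: U)
      ((k + 1) :: k :: U) := by
  intro s hs
  have hs' : s ((U.length : ℤ) + 1) = s ((U.length : ℤ) + 1 + 1) := by
    rw [show (U.length : ℤ) + 1 = (U.length : ℤ) + 2 - 1 by ring, hs]; congr 1; ring
  set n := U.length with hn
  -- the special variable
  set i : ℤ := (n : ℤ) - k with hi
  -- scaling of the last k variables
  set s1 := scl q n k s with hs1
  set s2 := scl q n k s1 with hs2
  have key : ∀ (r r' : ℤ → K), (∀ j : ℤ, j ≤ n → r j = r' j) → FF q U r = FF q U r' :=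
    fun r r' h => FF_congr q U r r' h
  obtain ⟨a0, b0, h0⟩ := FF_affine q U i s
  obtain ⟨a1, b1, h1⟩ := FF_affine q U i s1
  obtain ⟨a2, b2, h2⟩ := FF_affine q U i s2
  have f0 := h0 (s i)
  rw [Function.update_eq_self] at f0
  have E1 : ∀ r : ℤ → K, (∀ j : ℤ, j ≤ n → r j = Function.update s1 i (s i) j) →
    FF q U r = a1 + b1 * s i := fun r h => (key _ _ h).trans (h1 _)
  have E1q : ∀ r : ℤ → K, (∀ j : ℤ, j ≤ n → r j = Function.update s1 i (q * s i) j) →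
    FF q U r = a1 + b1 * (q * s i) := fun r h => (key _ _ h).trans (h1 _)
  have E2 : ∀ r : ℤ → K, (∀ j : ℤ, j ≤ n → r j = Function.update s2 i (s i) j) →
    FF q U r = a2 + b2 * s i := fun r h => (key _ _ h).trans (h2 _)
  have E2q : ∀ r : ℤ → K, (∀ j : ℤ, j ≤ n → r j = Function.update s2 i (q * s i) j) →
    FF q U r = a2 + b2 * (q * s i) := fun r h => (key _ _ h).trans (h2 _)
  have E2qq : ∀ r : ℤ → K, (∀ j : ℤ, j ≤ n → r j = Function.update s2 i (q * (q * s i)) j) →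
    FF q U r = a2 + b2 * (q * (q * s i)) := fun r h => (key _ _ h).trans (h2 _)
  have g1 : FF q U (scl q n (k + 1) s) = a1 + b1 * (q * s i) := E1q _ (by
    intro j hj; by_cases hji : j = i
    · subst hji; simp only [scl, Function.update_self]; rw [if_pos (by push_cast; omega)]
    · rw [Function.update_of_ne hji]; simp only [hs1, scl]; congr 1; push_cast; apply propext; omega)
  have g2 : FF q U (scl q n k s) = a1 + b1 * s i := E1 _ (by
    intro j hj; by_cases hji : j = i
    · subst hji; simp only [scl, Function.update_self]; rw [if_neg (by omega)]
    · rw [Function.update_of_ne hji])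
  have g3 : FF q U (scl q (n + 1) (k + 2) s) = a1 + b1 * (q * s i) := E1q _ (by
    intro j hj; by_cases hji : j = i
    · subst hji; simp only [scl, Function.update_self]; rw [if_pos (by push_cast; omega)]
    · rw [Function.update_of_ne hji]; simp only [hs1, scl]; congr 1; push_cast; apply propext; omega)
  have g4 : FF q U (scl q (n + 1) (k + 1) s) = a1 + b1 * s i := E1 _ (by
    intro j hj; by_cases hji : j = i
    · subst hji; simp only [scl, Function.update_self]; rw [if_neg (by push_cast; omega)]
    · rw [Function.update_of_ne hji]; simp only [hs1, scl]; congr 1; push_cast; apply propext; omega)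
  have g5 : FF q U (scl q n (k + 1) (scl q (n + 1) (k + 2) s)) = a2 + b2 * (q * (q * s i)) :=
    E2qq _ (by
    intro j hj; by_cases hji : j = i
    · subst hji; simp only [scl, Function.update_self]
      rw [if_pos (by push_cast; omega), if_pos (by push_cast; omega)]
    · rw [Function.update_of_ne hji]; simp only [hs2, hs1, scl]
      by_cases hc : (n : ℤ) + 1 - k ≤ j
      · rw [if_pos (by push_cast; omega), if_pos (by push_cast; omega),
          if_pos (by push_cast; omega), if_pos (by push_cast; omega)]
      · rw [if_neg (by push_cast; omega), if_neg (by push_cast; omega),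
          if_neg (by push_cast; omega), if_neg (by push_cast; omega)])
  have g6 : FF q U (scl q n (k + 1) (scl q (n + 1) (k + 1) s)) = a2 + b2 * (q * s i) :=
    E2q _ (by
    intro j hj; by_cases hji : j = i
    · subst hji; simp only [scl, Function.update_self]
      rw [if_pos (by push_cast; omega), if_neg (by push_cast; omega)]
    · rw [Function.update_of_ne hji]; simp only [hs2, hs1, scl]
      by_cases hc : (n : ℤ) + 1 - k ≤ j
      · rw [if_pos (by push_cast; omega), if_pos (by push_cast; omega),
          if_pos (by push_cast; omega), if_pos (by push_cast; omega)]
      · rw [if_neg (by push_cast; omega), if_neg (by push_cast; omega),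
          if_neg (by push_cast; omega), if_neg (by push_cast; omega)])
  have g7 : FF q U (scl q n k (scl q (n + 1) (k + 1) s)) = a2 + b2 * s i :=
    E2 _ (by
    intro j hj; by_cases hji : j = i
    · subst hji; simp only [scl, Function.update_self]
      rw [if_neg (by push_cast; omega), if_neg (by push_cast; omega)]
    · rw [Function.update_of_ne hji]; simp only [hs2, hs1, scl]
      by_cases hc : (n : ℤ) + 1 - k ≤ j
      · rw [if_pos (by push_cast; omega), if_pos (by push_cast; omega),
          if_pos (by push_cast; omega), if_pos (by push_cast; omega)]
      · rw [if_neg (by push_cast; omega), if_neg (by push_cast; omega),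
          if_neg (by push_cast; omega), if_neg (by push_cast; omega)])
  have y1 : scl q (n + 1) (k + 2) s ((n : ℤ) + 1) = q * s ((n : ℤ) + 1) := by
    simp only [scl]; rw [if_pos (by push_cast; omega)]
  have y2 : scl q (n + 1) (k + 1) s ((n : ℤ) + 1) = q * s ((n : ℤ) + 1) := by
    simp only [scl]; rw [if_pos (by push_cast; omega)]
  simp only [FF_cons, List.length_cons, ← hn, Nat.cast_add, Nat.cast_one]
  rw [g1, g2, g3, g4, g5, g6, g7, y1, y2, f0, ← hs']
  ring

/-- coefficient relation between the two variables of the pair -/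
def Sel (q : K) (h : ℤ) (L : List ℕ) : Prop :=
  ∀ (s r1 r2 : ℤ → K) (t : K), s (h - 1) = 0 → s h = 0 →
    r1 = Function.update s (h - 1) t → r2 = Function.update s h t →
    FF q L r1 - FF q L s = q * (FF q L r2 - FF q L s)

lemma Sel_base (q : K) (U : List ℕ) (v : ℕ) :
    Sel q ((U.length : ℤ) + 2) ((v + 1) :: v :: U) := by
  intro s r1 r2 t hy hz e1 e2
  set n := U.length with hn
  have hy' : s ((n : ℤ) + 1) = 0 := by
    rw [← hy]; congr 1; ring
  have hz' : s ((n : ℤ) + 1 + 1) = 0 := by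
    rw [← hz]; congr 1
  have r1y : r1 ((n : ℤ) + 1) = t := by
    rw [e1, show (n : ℤ) + 2 - 1 = n + 1 by ring, Function.update_self]
  have r1z : r1 ((n : ℤ) + 1 + 1) = 0 := by
    rw [e1, Function.update_of_ne (by omega), hz']
  have r2y : r2 ((n : ℤ) + 1) = 0 := by
    rw [e2, Function.update_of_ne (by omega), hy']
  have r2z : r2 ((n : ℤ) + 1 + 1) = t := by
    rw [e2, show (n : ℤ) + 1 + 1 = n + 2 by ring, Function.update_self]
  have r1s : ∀ j : ℤ, j ≤ n → r1 j = s j := fun j hj => by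
    rw [e1, Function.update_of_ne (by omega)]
  have r2s : ∀ j : ℤ, j ≤ n → r2 j = s j := fun j hj => by
    rw [e2, Function.update_of_ne (by omega)]
  -- generic evaluation
  have gen : ∀ r : ℤ → K, (∀ j : ℤ, j ≤ n → r j = s j) →
      FF q ((v + 1) :: v :: U) r = (1 - q)⁻¹ * ((r ((n : ℤ) + 1 + 1) - q ^ (v + 1)) *
        ((1 - q)⁻¹ * ((r ((n : ℤ) + 1) - q ^ v) * FF q U s +
          (1 - r ((n : ℤ) + 1)) * FF q U (scl q n v s))) + (1 - r ((n : ℤ) + 1 + 1)) *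
        ((1 - q)⁻¹ * ((q * r ((n : ℤ) + 1) - q ^ v) * FF q U (scl q n v s) +
          (1 - q * r ((n : ℤ) + 1)) * FF q U (scl q n v (scl q n v s))))) := by
    intro r hr
    have c1 : FF q U r = FF q U s := FF_congr q U _ _ hr
    have c2 : FF q U (scl q n v r) = FF q U (scl q n v s) :=
      FF_congr q U _ _ (fun j hj => by simp only [scl, hr j hj])
    have c3 : FF q U (scl q (n + 1) (v + 1) r) = FF q U (scl q n v s) :=
      FF_congr q U _ _ (fun j hj => by
        simp only [scl, hr j hj]; congr 1; push_cast; apply propext; omega)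
    have c4 : FF q U (scl q n v (scl q (n + 1) (v + 1) r)) = FF q U (scl q n v (scl q n v s)) :=
      FF_congr q U _ _ (fun j hj => by
        simp only [scl, hr j hj]
        by_cases hc : (n : ℤ) + 1 - v ≤ j
        · rw [if_pos (by push_cast; omega), if_pos (by push_cast; omega),
            if_pos (by push_cast; omega), if_pos (by omega)]
        · rw [if_neg (by push_cast; omega), if_neg (by push_cast; omega),
            if_neg (by push_cast; omega), if_neg (by omega)])
    have y1 : scl q (n + 1) (v + 1) r ((n : ℤ) + 1) = q * r ((n : ℤ) + 1) := by
      simp only [scl]; rw [if_pos (by push_cast; omega)]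
    simp only [FF_cons, List.length_cons, ← hn, Nat.cast_add, Nat.cast_one]
    rw [c1, c2, c3, c4, y1]
  rw [gen r1 r1s, gen r2 r2s, gen s (fun _ _ => rfl), r1y, r1z, r2y, r2z, hy', hz']
  ring

lemma Sel_cons (q : K) (h : ℤ) (L : List ℕ) (w : ℕ) (hl : h ≤ L.length)
    (hw : (L.length : ℤ) + 1 - w ≤ h - 1) (H : Sel q h L) : Sel q h (w :: L) := by
  intro s r1 r2 t hy hz e1 e2
  have h1 := H s r1 r2 t hy hz e1 e2
  have h2 := H (scl q L.length w s) (scl q L.length w r1) (scl q L.length w r2) (q * t)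
    (by simp [scl, hy]) (by simp [scl, hz])
    (by rw [e1, scl_update, if_pos (by omega)]) (by rw [e2, scl_update, if_pos (by omega)])
  have x1 : r1 ((L.length : ℤ) + 1) = s ((L.length : ℤ) + 1) := by
    rw [e1, Function.update_of_ne (by omega)]
  have x2 : r2 ((L.length : ℤ) + 1) = s ((L.length : ℤ) + 1) := by
    rw [e2, Function.update_of_ne (by omega)]
  rw [FF_cons, FF_cons, FF_cons, x1, x2]
  linear_combination (1 - q)⁻¹ * (s ((L.length : ℤ) + 1) - q ^ w) * h1 +
    (1 - q)⁻¹ * (1 - s ((L.length : ℤ) + 1)) * h2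

lemma Sel_append (q : K) (h : ℤ) (L : List ℕ) (hl : h = L.length) (A : List ℕ)
    (hA : ∀ w ∈ A, A.length + 1 ≤ w) (H : Sel q h L) : Sel q h (A ++ L) := by
  suffices ∀ c : ℕ, A.length + 1 ≤ c → (∀ w ∈ A, c ≤ w) → Sel q h (A ++ L) from this _ le_rfl hA
  clear hA
  induction A with
  | nil => intro c _ _; simpa using H
  | cons a A ih =>
    intro c hc hA
    have ha := hA a (by simp)
    simp only [List.length_cons] at hc
    refine Sel_cons q h _ a ?_ ?_ (ih c (by omega) (fun w hw => hA w (by simp [hw])))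
    · simp; omega
    · simp; omega

/-- the splitting bar -/
lemma Rel_split (q : K) (h : ℤ) (L : List ℕ) (k : ℕ) (hl : (L.length : ℤ) = h + k)
    (H : Sel q h L) : PairRel q h ((k + 2) :: L) ((k + 1) :: L) (k :: L) := by
  intro s hs
  set y := s h with hy
  set p := scl q L.length k s with hp
  set z := Function.update (Function.update p (h - 1) 0) h 0 with hz
  have hne : h - 1 ≠ h := by omega
  have comm : ∀ a b : K, Function.update (Function.update z (h - 1) a) h b =
      Function.update (Function.update z h b) (h - 1) a := fun a b =>
    Function.update_comm hne _ _ _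
  -- affine structure
  obtain ⟨a, b, hab⟩ := FF_affine q L (h - 1) z
  have hcd : ∀ u : K, ∃ c d : K, ∀ t, FF q L (Function.update (Function.update z (h - 1) u) h t)
      = c + d * t := fun u => FF_affine q L h _
  obtain ⟨c0, d0, hc0⟩ := hcd 0
  obtain ⟨c1, d1, hc1⟩ := FF_affine q L (h - 1) (Function.update z h 1)
  have z0 : Function.update z (h - 1) 0 = z := by
    rw [Function.update_eq_self_iff]; simp [hz, hne]
  have zh0 : Function.update z h 0 = z := by
    rw [Function.update_eq_self_iff]; simp [hz]
  -- bilinear formula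
  have bil : ∀ u t : K, FF q L (Function.update (Function.update z (h - 1) u) h t) =
      (a + b * u) * (1 - t) + (c1 + d1 * u) * t := by
    intro u t
    obtain ⟨c, d, hc⟩ := hcd u
    have e0 := hc 0
    have e1 := hc 1
    rw [comm, zh0, hab] at e0
    rw [comm, hc1] at e1
    rw [hc t]
    linear_combination (t - 1) * e0 - t * e1
  have S := H z (Function.update z (h - 1) 1) (Function.update z h 1) 1 (by simp [hz, hne])
    (by simp [hz]) rfl rfl
  have sa : FF q L z = a := by rw [← z0, hab]; ring
  have sc : FF q L (Function.update z h 1) = c1 := by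
    rw [← Function.update_eq_self (h - 1) (Function.update z h 1), hc1,
      Function.update_of_ne hne]
    simp [hz, hne]
  rw [hab, sa, sc] at S
  have form : ∀ (w : ℕ) (u t : K), scl q L.length w s (h - 1) = u → scl q L.length w s h = t →
      k ≤ w → w ≤ k + 2 →
      FF q L (scl q L.length w s) = (a + b * u) * (1 - t) + (c1 + d1 * u) * t := by
    intro w u t hu ht hk hk2
    rw [← bil]
    congr 1
    funext j
    by_cases h1 : j = h
    · subst h1; rw [ht]; simp
    · by_cases h2 : j = h - 1
      · subst h2; rw [hu]; simp [h1]
      · rw [Function.update_of_ne h1, Function.update_of_ne h2, hz, Function.update_of_ne h1,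
          Function.update_of_ne h2, hp]
        simp only [scl]
        congr 1; apply propext; omega
  have F0 := form k y y (by simp only [scl]; rw [if_neg (by omega), hs])
    (by simp only [scl]; rw [if_neg (by omega)]) (by omega) (by omega)
  have F1 := form (k + 1) y (q * y)
    (by simp only [scl]; rw [if_neg (by push_cast; omega), hs])
    (by simp only [scl]; rw [if_pos (by push_cast; omega)]) (by omega) (by omega)
  have F2 := form (k + 2) (q * y) (q * y)
    (by simp only [scl]; rw [if_pos (by push_cast; omega), hs])
    (by simp only [scl]; rw [if_pos (by push_cast; omega)]) (by omega) (by omega)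
  rw [FF_cons, FF_cons, FF_cons, F0, F1, F2]
  linear_combination (1 - q)⁻¹ * (1 - s ((L.length : ℤ) + 1)) * y * (q - 1) * S

lemma Qsched_eval (q : K) (W : List ℕ) (x : K) :
    (Qsched q W).eval x = FF q W.reverse (fun _ => x) := by
  unfold Qsched Psched FF
  rw [← Polynomial.coe_aeval_eq_eval, ← MvPolynomial.coe_aeval_eq_eval]
  simp only [RingHom.coe_coe]
  have := MvPolynomial.comp_aeval (R := K) (fun _ : ℤ => (Polynomial.X : Polynomial K))
    (Polynomial.aeval (R := K) x)
  have h2 := DFunLike.congr_fun this (Prev q W.reverse)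
  simpa using h2

lemma one_add_qq_ne : (1 + qq : K) ≠ 0 := by
  intro h
  have h1 : (algebraMap (Polynomial ℚ) (RatFunc ℚ)) (Polynomial.X + Polynomial.C 1) = 0 := by
    simp only [map_add, RatFunc.algebraMap_X, map_one]
    rw [add_comm]; exact h
  rw [map_eq_zero_iff _ (RatFunc.algebraMap_injective ℚ)] at h1
  exact Polynomial.X_add_C_ne_zero 1 h1

/-- Proposition 3.4, identity 3.10: with W = (U,v,v+1,V',j,V'') as
in Proposition 3.4,
Q_W = (q/(1+q)) Q_{U,v,v+1,V',j-1,V''} + Q_{U,v,v,V',j+1,V''} - (q/(1+q)) Q_{U,v-1,v,V',j+1,V''}. -/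
theorem stmt15 (U V' V'' : List ℕ) (v j : ℕ)
    (hW : Legal (U ++ v :: (v + 1) :: (V' ++ j :: V'')))
    (hpos : V'.length + 1 = j)
    (hcanon : ∀ i : ℕ, U.length + 1 ≤ i →
      i + 1 < (U ++ v :: (v + 1) :: (V' ++ j :: V'')).length →
      (U ++ v :: (v + 1) :: (V' ++ j :: V'')).getD (i + 1) 0 ≠
        (U ++ v :: (v + 1) :: (V' ++ j :: V'')).getD i 0 + 1)
    (hfirst : ∀ r : ℕ, r < (U ++ v :: (v + 1) :: (V' ++ j :: V'')).length →
      ((r : ℤ) + 1) < (U.length : ℤ) + 2 + (j : ℤ) →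
      ((r : ℤ) + 1) - ((U ++ v :: (v + 1) :: (V' ++ j :: V'')).getD r 0 : ℤ) ≠
        (U.length : ℤ) + 2) :
    Qsched qq (U ++ v :: (v + 1) :: (V' ++ j :: V'')) =
      Polynomial.C (qq / (1 + qq)) * Qsched qq (U ++ v :: (v + 1) :: (V' ++ (j - 1) :: V'')) +
        Qsched qq (U ++ v :: v :: (V' ++ (j + 1) :: V'')) -
          Polynomial.C (qq / (1 + qq)) *
            Qsched qq (U ++ (v - 1) :: v :: (V' ++ (j + 1) :: V'')) := by
  obtain ⟨hhead, hchain0⟩ := hW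
  have hchain : List.IsChain (fun a b => 1 ≤ b ∧ b ≤ a + 1)
      (U ++ v :: (v + 1) :: (V' ++ j :: V'')) := hchain0
  have hv : 1 ≤ v := by
    rcases List.eq_nil_or_concat U with rfl | ⟨U0, u, rfl⟩
    · exact (hhead (by simp)).1
    · rw [List.concat_eq_append, List.append_assoc, List.singleton_append,
        List.isChain_append_cons_cons] at hchain
      exact hchain.2.1.1
  have hdec : List.IsChain (fun a b => b ≤ a) ((v + 1) :: (V' ++ j :: V'')) := by
    rw [List.isChain_iff_getElem] at hchain ⊢
    intro i hi
    have hi' : U.length + 1 + i + 1 < (U ++ v :: (v + 1) :: (V' ++ j :: V'')).length := by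
      simp at hi ⊢; omega
    have h1 := (hchain (U.length + 1 + i) hi').2
    have h2 := hcanon (U.length + 1 + i) (by omega) hi'
    rw [List.getD_eq_getElem _ _ hi', List.getD_eq_getElem _ _ (by omega)] at h2
    have e : ∀ (m : ℕ) (hm : m < ((v + 1) :: (V' ++ j :: V'')).length)
        (hm' : U.length + 1 + m < (U ++ v :: (v + 1) :: (V' ++ j :: V'')).length),
        (U ++ v :: (v + 1) :: (V' ++ j :: V''))[U.length + 1 + m] =
          ((v + 1) :: (V' ++ j :: V''))[m] := by
      intro m hm hm'
      rw [List.getElem_append_right (by omega)]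
      simp only [show U.length + 1 + m - U.length = m + 1 by omega, List.getElem_cons_succ]
    have e1 := e i (by omega) (by omega)
    have e2 := e (i + 1) hi hi'
    simp only [← add_assoc] at e2
    rw [e1, e2] at h1 h2
    omega
  have hpw := (List.isChain_iff_pairwise (R := fun a b : ℕ => b ≤ a)).1 hdec
  rw [List.pairwise_cons, List.pairwise_append, List.pairwise_cons] at hpw
  obtain ⟨-, -, ⟨hV'', -⟩, hV'⟩ := hpw
  have hV'1 : ∀ w ∈ V'.reverse, V'.reverse.length + 1 ≤ w := fun w hw => by
    rw [List.length_reverse, hpos]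
    exact hV' w (by simpa using hw) j (by simp)
  have hV''1 : ∀ w ∈ V''.reverse, w ≤ j := fun w hw => hV'' w (by simpa using hw)
  obtain ⟨k, rfl⟩ : ∃ k, v = k + 1 := ⟨v - 1, by omega⟩
  obtain ⟨m, rfl⟩ : ∃ m, j = m + 1 := ⟨j - 1, by omega⟩
  have hm : V'.length = m := by omega
  set R := U.reverse with hR
  have hRl : (U.length : ℤ) = R.length := by simp [hR]
  have A1 := Rel_append_low qq _ _ _ _ (by simp) (by simp) (by simp; ring) V'.reverse hV'1
    (Rel_base qq R k)
  have A2 := Rel_cons qq _ _ _ _ (m + 2) (by simp) (by simp)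
    (by simp; omega) (Or.inl (by simp; omega)) A1
  have A3 := Rel_append_high qq _ _ _ _ (by simp) (by simp) (m + 1)
    (by simp; omega) V''.reverse hV''1 A2
  have B1 := Sel_append qq _ _ (by simp; ring) V'.reverse hV'1 (Sel_base qq R (k + 1))
  have B2 := Rel_split qq _ _ m (by simp; omega) B1
  have B3 := Rel_append_high qq _ _ _ _ (by simp) (by simp) (m + 1)
    (by simp; omega) V''.reverse hV''1 B2
  apply Polynomial.funext
  intro x
  have a := A3 (fun _ => x) rfl
  have b := B3 (fun _ => x) rfl
  simp only [Polynomial.eval_add, Polynomial.eval_sub, Polynomial.eval_mul, Polynomial.eval_C,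
    Qsched_eval, List.reverse_append, List.reverse_cons, List.append_assoc, List.cons_append,
    List.nil_append, Nat.add_sub_cancel, ← hR]
  have hq := one_add_qq_ne
  rw [a] at b
  field_simp
  linear_combination -b

end
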